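/- arXiv:2107.03503 — 5 statements merged into one kernel-verified Lean document; each statement's English description precedes it below -/
import Mathlib

section
/- (Proposition 3.1) The matrices x_m, y_m define a module in CM(B_{k,n}); concretely: x_m y_m = y_m x_m = t·(identity matrix) for every m ∈ {1,…,n}, and for every vertex m ∈ {1,…,n} the relation x^k = y^{n−k} holds, i.e. x_{m+k}·x_{m+k−1}⋯x_{m+1} = y_{m−(n−k)+1}·y_{m−(n−k)+2}⋯y_m as products of 2×2 matrices over R (all indices read modulo n; both sides represent the induced map from the copy of R² at vertex m to the copy at vertex m+k ≡ m−(n−k) mod n). -/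
open PowerSeries Matrix

noncomputable section

/-- `R` is the ring of formal power series `ℂ[[t]]`. -/
abbrev R : Type := PowerSeries ℂ

/-- The variable `t` of `ℂ[[t]]`. -/
noncomputable def t : R := PowerSeries.X

/-- `2 × 2` matrices over `R = ℂ[[t]]`. -/
abbrev M2 : Type := Matrix (Fin 2) (Fin 2) R

/-- The product `x_{m+k} ⬝ x_{m+k-1} ⬝ ⋯ ⬝ x_{m+1}` of `k` arrow matrices along the
cycle, representing the map `x^k` from the copy of `R²` at vertex `m` to the copy at
vertex `m + k` (indices modulo `n`). -/
def pathProdX {n : ℕ} (x : ZMod n → M2) (m : ZMod n) : ℕ → M2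
  | 0 => 1
  | s + 1 => x (m + ((s + 1 : ℕ) : ZMod n)) * pathProdX x m s

/-- The product `y_{m-k+1} ⬝ y_{m-k+2} ⬝ ⋯ ⬝ y_m` of `k` arrow matrices along the
cycle, representing the map `y^k` from the copy of `R²` at vertex `m` to the copy at
vertex `m - k` (indices modulo `n`). -/
def pathProdY {n : ℕ} (y : ZMod n → M2) (m : ZMod n) : ℕ → M2
  | 0 => 1
  | s + 1 => y (m - ((s : ℕ) : ZMod n)) * pathProdY y m s

lemma pathProdX_add {n : ℕ} (x : ZMod n → M2) (m : ZMod n) (a c : ℕ) :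
    pathProdX x m (a + c) = pathProdX x (m + (a : ZMod n)) c * pathProdX x m a := by
  induction c with
  | zero => simp [pathProdX]
  | succ c ih =>
    rw [← add_assoc, pathProdX, ih, pathProdX, Matrix.mul_assoc]
    congr 2
    push_cast
    ring

lemma pathXY {n : ℕ} (x y : ZMod n → M2) (h : ∀ m, x m * y m = t • (1 : M2)) (m : ZMod n)
    (s : ℕ) : pathProdX x (m - (s : ZMod n)) s * pathProdY y m s = t ^ s • (1 : M2) := by
  induction s with
  | zero => simp [pathProdX, pathProdY]
  | succ s ih =>
    have e : pathProdX x (m - ((s + 1 : ℕ) : ZMod n)) (s + 1) =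
        pathProdX x (m - (s : ZMod n)) s * x (m - (s : ZMod n)) := by
      rw [add_comm s 1, pathProdX_add]
      have h1 : m - ((1 + s : ℕ) : ZMod n) + ((1 : ℕ) : ZMod n) = m - (s : ZMod n) := by
        push_cast; ring
      rw [h1]
      congr 1
      simp only [pathProdX, mul_one]
      congr 1
    rw [e, pathProdY, Matrix.mul_assoc, ← Matrix.mul_assoc (x _), h]
    rw [Matrix.smul_mul, Matrix.one_mul, Matrix.mul_smul, ih, smul_smul, pow_succ, mul_comm]

lemma t_ne_zero : t ≠ 0 := PowerSeries.X_ne_zero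

lemma cancel_left_M2 (A B C D : M2) (e : ℕ) (hAB : A * D = t ^ e • (1 : M2))
    (h : A * B = A * C) : B = C := by
  have hD : D * A = t ^ e • (1 : M2) := by
    have hdet : A.det ≠ 0 := by
      intro h0
      have := congrArg Matrix.det hAB
      rw [Matrix.det_mul, h0, Matrix.det_smul, Matrix.det_one] at this
      rw [zero_mul, mul_one] at this
      exact pow_ne_zero _ (pow_ne_zero _ t_ne_zero) this.symm
    have h1 : A * (D * A) = A * (t ^ e • (1 : M2)) := by
      rw [← Matrix.mul_assoc, hAB]; simp
    have h2 : A.adjugate * (A * (D * A)) = A.adjugate * (A * (t ^ e • (1 : M2))) := by rw [h1]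
    rw [← Matrix.mul_assoc, ← Matrix.mul_assoc A.adjugate A (t ^ e • (1 : M2)),
      Matrix.adjugate_mul] at h2
    simp only [Matrix.smul_mul, Matrix.one_mul] at h2
    exact smul_right_injective M2 hdet h2
  have h2 : D * (A * B) = D * (A * C) := by rw [h]
  rw [← Matrix.mul_assoc, ← Matrix.mul_assoc, hD] at h2
  simp only [Matrix.smul_mul, Matrix.one_mul] at h2
  exact smul_right_injective M2 (pow_ne_zero e t_ne_zero) h2

lemma comm_M2 (A D : M2) (e : ℕ) (hAB : A * D = t ^ e • (1 : M2)) :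
    D * A = t ^ e • (1 : M2) := by
  apply cancel_left_M2 A _ _ D e hAB
  rw [← Matrix.mul_assoc, hAB]; simp

lemma filter_succ (P : Finset ℕ) (s : ℕ) : (P.filter (· ≤ s + 1)).card =
    (P.filter (· ≤ s)).card + if s + 1 ∈ P then 1 else 0 := by
  split_ifs with h
  · have : P.filter (· ≤ s + 1) = insert (s + 1) (P.filter (· ≤ s)) := by
      ext a
      simp only [Finset.mem_filter, Finset.mem_insert]
      constructor
      · rintro ⟨h1, h2⟩
        by_cases h3 : a = s + 1
        · exact Or.inl h3
        · exact Or.inr ⟨h1, by omega⟩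
      · rintro (h1 | ⟨h1, h2⟩)
        · subst h1; exact ⟨h, le_refl _⟩
        · exact ⟨h1, by omega⟩
    rw [this, Finset.card_insert_of_notMem (by simp)]
  · congr 1
    ext a
    simp only [Finset.mem_filter]
    constructor
    · rintro ⟨h1, h2⟩
      refine ⟨h1, ?_⟩
      have : a ≠ s + 1 := fun h3 => h (h3 ▸ h1)
      omega
    · rintro ⟨h1, h2⟩
      exact ⟨h1, by omega⟩

lemma order_aux (r : ℕ) (i j : ℕ → ℕ) (hij : ∀ l, l < r → i l < j l)
    (hji : ∀ l, l + 1 < r → j l < i (l + 1)) (l d : ℕ) (h : l + d + 1 < r) :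
    j l < i (l + d + 1) := by
  induction d with
  | zero => exact hji l h
  | succ d ih =>
    have h1 := ih (by omega)
    have h2 := hij (l + d + 1) (by omega)
    have h3 := hji (l + d + 1) (by omega)
    have : l + (d + 1) + 1 = l + d + 1 + 1 := by ring
    rw [this]
    omega

lemma order_lt (r : ℕ) (i j : ℕ → ℕ) (hij : ∀ l, l < r → i l < j l)
    (hji : ∀ l, l + 1 < r → j l < i (l + 1)) (l l' : ℕ) (h : l < l') (h' : l' < r) :
    j l < i l' := by
  obtain ⟨d, rfl⟩ := Nat.exists_eq_add_of_lt h
  exact order_aux r i j hij hji l d h'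

/-- The partial product from vertex `0`, up to one factor `t`. -/
lemma partial_prod
    (n r : ℕ) (i j : ℕ → ℕ)
    (hi1 : 1 ≤ i 0)
    (hij : ∀ l, l < r → i l < j l)
    (hji : ∀ l, l + 1 < r → j l < i (l + 1))
    (P : Finset ℕ) (hP : P ⊆ Finset.Icc 1 n)
    (hPdisj : ∀ l, l < r → i l ∉ P ∧ j l ∉ P)
    (b : ℕ → R)
    (x : ZMod n → M2)
    (hxI : ∀ l, l < r → x ((i l : ZMod n)) = !![t, b (2 * l + 1); 0, 1])
    (hxJ : ∀ l, l < r → x ((j l : ZMod n)) = !![1, b (2 * l + 2); 0, t])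
    (hxP : ∀ m ∈ P, x ((m : ZMod n)) = 1)
    (hxO : ∀ m ∈ Finset.Icc 1 n, m ∉ P → (∀ l, l < r → m ≠ i l ∧ m ≠ j l) →
      x ((m : ZMod n)) = t • (1 : M2)) (s : ℕ) (hs : s ≤ n) :
    (∃ l o, l ≤ r ∧ (∀ l', l' < l → j l' ≤ s) ∧ (l < r → s < i l) ∧
      o + (P.filter (· ≤ s)).card + 2 * l = s ∧
      t • pathProdX x 0 s = t ^ o •
        (!![t ^ (l + 1), t ^ l * ∑ m ∈ Finset.range (2 * l), b (m + 1); 0, t ^ (l + 1)] : M2)) ∨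
    (∃ l o, l < r ∧ i l ≤ s ∧ s < j l ∧
      o + (P.filter (· ≤ s)).card + 2 * l + 1 = s ∧
      t • pathProdX x 0 s = t ^ o •
        (!![t ^ (l + 2), t ^ (l + 1) * ∑ m ∈ Finset.range (2 * l + 1), b (m + 1);
          0, t ^ (l + 1)] : M2)) := by
  have ord := order_lt r i j hij hji
  induction s with
  | zero =>
    left
    refine ⟨0, 0, Nat.zero_le _, by simp, fun _ => hi1, ?_, ?_⟩
    · have : P.filter (· ≤ 0) = ∅ := by
        ext a
        simp only [Finset.mem_filter, Finset.notMem_empty, iff_false]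
        rintro ⟨h1, h2⟩
        have := Finset.mem_Icc.1 (hP h1)
        omega
      rw [this]; rfl
    · ext a c : 1
      fin_cases a <;> fin_cases c <;> simp [pathProdX]
  | succ s ih =>
    have hcard := filter_succ P s
    have hX : t • pathProdX x 0 (s + 1) = x ((s + 1 : ℕ) : ZMod n) * (t • pathProdX x 0 s) := by
      rw [pathProdX, zero_add, Matrix.mul_smul]
    rcases ih (by omega) with ⟨l, o, hl, hj, hi, hc, hp⟩ | ⟨l, o, hl, hi, hj, hc, hp⟩
    · rw [hp] at hX
      by_cases hsP : s + 1 ∈ P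
      · rw [if_pos hsP] at hcard
        left
        refine ⟨l, o, hl, fun l' h' => (hj l' h').trans (by omega), ?_, by omega, ?_⟩
        · intro h
          have h1 := hi h
          have h2 : s + 1 ≠ i l := fun h3 => (hPdisj l h).1 (h3 ▸ hsP)
          omega
        · rw [hX, hxP _ hsP, Matrix.one_mul]
      · rw [if_neg hsP] at hcard
        by_cases hsi : l < r ∧ s + 1 = i l
        · obtain ⟨hlr, hsi⟩ := hsi
          right
          refine ⟨l, o, hlr, by omega, by have := hij l hlr; omega, by omega, ?_⟩
          rw [hX, hsi, hxI l hlr, Matrix.mul_smul, Finset.sum_range_succ]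
          congr 1
          ext a c : 1
          fin_cases a <;> fin_cases c <;> simp [Matrix.mul_apply, Fin.sum_univ_two] <;> ring
        · left
          refine ⟨l, o + 1, hl, fun l' h' => (hj l' h').trans (by omega), ?_, by omega, ?_⟩
          · intro h
            have := hi h
            omega
          · rw [hX, hxO _ (Finset.mem_Icc.2 ⟨by omega, hs⟩) hsP, Matrix.smul_mul, Matrix.one_mul,
              smul_smul, ← pow_succ']
            intro l' hl'
            have h0 := hij l' hl'
            rcases lt_trichotomy l' l with h | h | h
            · have := hj l' h
              omega
            · subst h
              have := hi hl'
              omega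
            · have h1 := ord l l' h hl'
              have h2 := hij l (by omega)
              have h3 := hi (by omega)
              omega
    · rw [hp] at hX
      by_cases hsP : s + 1 ∈ P
      · rw [if_pos hsP] at hcard
        right
        refine ⟨l, o, hl, by omega, ?_, by omega, ?_⟩
        · have h2 : s + 1 ≠ j l := fun h3 => (hPdisj l hl).2 (h3 ▸ hsP)
          omega
        · rw [hX, hxP _ hsP, Matrix.one_mul]
      · rw [if_neg hsP] at hcard
        by_cases hsj : s + 1 = j l
        · left
          refine ⟨l + 1, o, hl, ?_, ?_, by omega, ?_⟩
          · intro l' h'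
            rcases Nat.lt_succ_iff_lt_or_eq.1 h' with h | h
            · have := ord l' l h hl
              omega
            · subst h; omega
          · intro h
            have := hji l h
            omega
          rw [hX, hsj, hxJ l hl, Matrix.mul_smul, show 2 * (l + 1) = 2 * l + 1 + 1 by ring,
            Finset.sum_range_succ _ (2 * l + 1)]
          congr 1
          ext a c : 1
          fin_cases a <;> fin_cases c <;> simp [Matrix.mul_apply, Fin.sum_univ_two] <;> ring
        · right
          refine ⟨l, o + 1, hl, by omega, by omega, by omega, ?_⟩
          rw [hX, hxO _ (Finset.mem_Icc.2 ⟨by omega, hs⟩) hsP, Matrix.smul_mul, Matrix.one_mul,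
              smul_smul, ← pow_succ']
          intro l' hl'
          have h0 := hij l' hl'
          rcases lt_trichotomy l' l with h | h | h
          · have := ord l' l h hl
            omega
          · subst h
            omega
          · have h1 := ord l l' h hl'
            omega

/-- (Proposition 3.1.) The matrices `x_m`, `y_m` attached to the tightly `r`-interlacing
`k`-subsets `I = {i_1,…,i_r} ∪ P` and `J = {j_1,…,j_r} ∪ P` of `{1,…,n}` (with
`b_1 + ⋯ + b_{2r} = 0`) define a module in `CM(B_{k,n})`: `x_m y_m = y_m x_m = t·id`
for every vertex `m`, and `x^k = y^{n-k}` as maps out of every vertex `m`.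
Here `i, j : ℕ → R` are `0`-indexed, so `i l, j l` for `l < r` are the paper's
`i_{l+1}, j_{l+1}`, and `b (2*l+1), b (2*l+2)` are the paper's `b_{2(l+1)-1}, b_{2(l+1)}`. -/
theorem stmt0
    (n k r : ℕ) (hn : 6 ≤ n) (hr2 : 2 ≤ r) (hrk : r ≤ k) (hkrn : k + r ≤ n)
    (i j : ℕ → ℕ)
    (hi1 : 1 ≤ i 0) (hjr : j (r - 1) ≤ n)
    (hij : ∀ l, l < r → i l < j l)
    (hji : ∀ l, l + 1 < r → j l < i (l + 1))
    (P : Finset ℕ) (hP : P ⊆ Finset.Icc 1 n)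
    (hPcard : P.card = k - r)
    (hPdisj : ∀ l, l < r → i l ∉ P ∧ j l ∉ P)
    (b : ℕ → R) (hb : ∑ m ∈ Finset.Icc 1 (2 * r), b m = 0)
    (x y : ZMod n → M2)
    (hxI : ∀ l, l < r → x ((i l : ZMod n)) = !![t, b (2 * l + 1); 0, 1])
    (hxJ : ∀ l, l < r → x ((j l : ZMod n)) = !![1, b (2 * l + 2); 0, t])
    (hxP : ∀ m ∈ P, x ((m : ZMod n)) = 1)
    (hxO : ∀ m ∈ Finset.Icc 1 n, m ∉ P → (∀ l, l < r → m ≠ i l ∧ m ≠ j l) →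
      x ((m : ZMod n)) = t • (1 : M2))
    (hyI : ∀ l, l < r → y ((i l : ZMod n)) = !![1, -b (2 * l + 1); 0, t])
    (hyJ : ∀ l, l < r → y ((j l : ZMod n)) = !![t, -b (2 * l + 2); 0, 1])
    (hyP : ∀ m ∈ P, y ((m : ZMod n)) = t • (1 : M2))
    (hyO : ∀ m ∈ Finset.Icc 1 n, m ∉ P → (∀ l, l < r → m ≠ i l ∧ m ≠ j l) →
      y ((m : ZMod n)) = 1) :
    (∀ m : ZMod n, x m * y m = t • (1 : M2) ∧ y m * x m = t • (1 : M2)) ∧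
    (∀ m : ZMod n, pathProdX x m k = pathProdY y m (n - k)) := by
  have hn0 : NeZero n := ⟨by omega⟩
  have hrep : ∀ m : ZMod n, ∃ a ∈ Finset.Icc 1 n, (a : ZMod n) = m := by
    intro m
    by_cases h : m.val = 0
    · refine ⟨n, Finset.mem_Icc.2 ⟨by omega, le_refl _⟩, ?_⟩
      rw [ZMod.natCast_self]
      exact ((ZMod.val_eq_zero m).1 h).symm
    · exact ⟨m.val, Finset.mem_Icc.2 ⟨by omega, (ZMod.val_lt m).le⟩, ZMod.natCast_zmod_val m⟩
  have hxy : ∀ m : ZMod n, x m * y m = t • (1 : M2) ∧ y m * x m = t • (1 : M2) := by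
    intro m
    obtain ⟨a, ha, rfl⟩ := hrep m
    by_cases haP : a ∈ P
    · rw [hxP a haP, hyP a haP]; simp
    by_cases hO : ∀ l, l < r → a ≠ i l ∧ a ≠ j l
    · rw [hxO a ha haP hO, hyO a ha haP hO]; simp
    push Not at hO
    obtain ⟨l, hl, h⟩ := hO
    by_cases hai : a = i l
    · rw [hai, hxI l hl, hyI l hl]
      constructor <;> ext u v : 1 <;> fin_cases u <;> fin_cases v <;>
        simp [Matrix.mul_apply, Fin.sum_univ_two] <;> ring
    · rw [h hai, hxJ l hl, hyJ l hl]
      constructor <;> ext u v : 1 <;> fin_cases u <;> fin_cases v <;>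
        simp [Matrix.mul_apply, Fin.sum_univ_two] <;> ring
  refine ⟨hxy, ?_⟩
  have h0 : pathProdX x 0 n = t ^ (n - k) • (1 : M2) := by
    have hPn : P.filter (· ≤ n) = P := by
      apply Finset.filter_true_of_mem
      intro a ha
      exact (Finset.mem_Icc.1 (hP ha)).2
    have hjle : ∀ l, l < r → j l ≤ n := by
      intro l hl
      rcases Nat.lt_or_ge l (r - 1) with h | h
      · have h1 := order_lt r i j hij hji l (r - 1) h (by omega)
        have h2 := hij (r - 1) (by omega)
        omega
      · have : l = r - 1 := by omega
        rw [this]; exact hjr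
    rcases partial_prod n r i j hi1 hij hji P hP hPdisj b x hxI hxJ hxP hxO n le_rfl with
      ⟨l, o, hl, hj, hi, hc, hp⟩ | ⟨l, o, hl, hi, hj, hc, hp⟩
    · have hlr : l = r := by
        by_contra hne
        have h1 : l < r := by omega
        have h2 := hi h1
        have h3 := hij l h1
        have h4 := hjle l h1
        omega
      subst hlr
      have hb' : ∑ m ∈ Finset.range (2 * l), b (m + 1) = 0 := by
        rw [← hb, Finset.range_eq_Ico, Finset.sum_Ico_add' b 0 (2 * l) 1]
        rfl
      rw [hb'] at hp
      rw [hPn, hPcard] at hc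
      have ho : n - k = o + l := by omega
      apply smul_right_injective M2 t_ne_zero
      change t • _ = t • _
      rw [hp, ho]
      ext u v : 1
      fin_cases u <;> fin_cases v <;> simp <;> ring
    · have := hjle l hl
      omega
  have hcyc : ∀ m : ZMod n, pathProdX x m n = t ^ (n - k) • (1 : M2) := by
    intro m
    obtain ⟨a, ha, rfl⟩ := hrep m
    have han := (Finset.mem_Icc.1 ha).2
    have e1 := pathProdX_add x 0 a (n - a)
    have e2 := pathProdX_add x (a : ZMod n) (n - a) a
    rw [Nat.add_sub_cancel' han, h0, zero_add] at e1
    have e3 : (a : ZMod n) + ((n - a : ℕ) : ZMod n) = 0 := by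
      rw [← Nat.cast_add, Nat.add_sub_cancel' han, ZMod.natCast_self]
    rw [Nat.sub_add_cancel han, e3] at e2
    rw [e2]
    exact comm_M2 _ _ _ e1.symm
  intro m
  have hk : k ≤ n := by omega
  have e1 := pathProdX_add x m k (n - k)
  rw [Nat.add_sub_cancel' hk, hcyc] at e1
  have e2 := pathXY x y (fun m => (hxy m).1) m (n - k)
  have e3 : m - ((n - k : ℕ) : ZMod n) = m + (k : ZMod n) := by
    rw [Nat.cast_sub hk, ZMod.natCast_self]; ring
  rw [e3] at e2
  exact cancel_left_M2 _ _ _ _ _ e2 (e1.symm.trans e2.symm)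

end
end

section
/- (Proposition 3.2) Let (φ_1,…,φ_n) be an endomorphism family, write φ_{j_r} = [[a, b],[c, d]] with a, b, c, d ∈ R, and set B_m := b_1 + ⋯ + b_m for 1 ≤ m ≤ 2r. Then: (i) t divides c, say c = t·c'; (ii) for every l ∈ {1,…,r} the element (d−a)B_{2l} − B_{2l}²·c' is divisible by t, say (d−a)B_{2l} − B_{2l}²·c' = t·e_l; (iii) for every l ∈ {1,…,r}, φ_{i_l} = [[a + B_{2l−1}c', tb + (d−a)B_{2l−1} − B_{2l−1}²c'],[c', d − B_{2l−1}c']] and φ_{j_l} = [[a + B_{2l}c', b + e_l],[c, d − B_{2l}c']]; and (iv) φ_m = φ_{m−1} for every m ∈ P ∪ ({1,…,n}∖(I∪J)). -/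
open PowerSeries Matrix

noncomputable section

theorem t_cancel {u v : R} (h : t * u = t * v) : u = v :=
  mul_left_cancel₀ (show t ≠ 0 from PowerSeries.X_ne_zero) h

theorem stepI (A A' : M2) (β : R) (h : !![t, β; 0, 1] * A = A' * !![t, β; 0, 1]) :
    A 1 0 = t * A' 1 0 ∧
    A' = !![A 0 0 + β * A' 1 0, t * A 0 1 + β * A 1 1 - β * (A 0 0 + β * A' 1 0);
            A' 1 0, A 1 1 - β * A' 1 0] := by
  have h00 := congrFun (congrFun h 0) 0
  have h01 := congrFun (congrFun h 0) 1
  have h10 := congrFun (congrFun h 1) 0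
  have h11 := congrFun (congrFun h 1) 1
  simp [Matrix.mul_apply, Fin.sum_univ_two] at h00 h01 h10 h11
  have e10 : A 1 0 = t * A' 1 0 := by rw [h10]; ring
  have e00 : A' 0 0 = A 0 0 + β * A' 1 0 := by
    apply t_cancel
    linear_combination -h00 + β * e10
  refine ⟨e10, ?_⟩
  refine Matrix.ext fun p q => ?_
  fin_cases p <;> fin_cases q <;> simp
  · exact e00
  · linear_combination -h01 - β * e00
  · linear_combination -h11

theorem stepJ (A A' : M2) (β : R) (h : !![1, β; 0, t] * A = A' * !![1, β; 0, t]) :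
    t * A' 0 1 = A 0 1 + β * A 1 1 - β * (A 0 0 + β * A 1 0) ∧
    A' = !![A 0 0 + β * A 1 0, A' 0 1; t * A 1 0, A 1 1 - β * A 1 0] := by
  have h00 := congrFun (congrFun h 0) 0
  have h01 := congrFun (congrFun h 0) 1
  have h10 := congrFun (congrFun h 1) 0
  have h11 := congrFun (congrFun h 1) 1
  simp [Matrix.mul_apply, Fin.sum_univ_two] at h00 h01 h10 h11
  refine ⟨?_, ?_⟩
  · linear_combination -h01 - β * (-h00)
  refine Matrix.ext fun p q => ?_
  fin_cases p <;> fin_cases q <;> simp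
  · exact h00.symm
  · exact h10.symm
  · apply t_cancel
    linear_combination -h11 + β * h10

/-- (Proposition 3.2.) Let `(φ_1,…,φ_n)` be an endomorphism family of the module
`𝕄(I,J)` attached to tightly `r`-interlacing `k`-subsets `I, J` of `{1,…,n}`, and
write `φ_{j_r} = [[a, b₀],[c, d]]`.  With `B m := b_1 + ⋯ + b_m`, one has:
(i) `t ∣ c`, say `c = t·c'`;
(ii)–(iii) for every `l`, `t ∣ (d−a)·B_{2l} − B_{2l}²·c'`, say `= t·e_l`, and
`φ_{i_l} = [[a + B_{2l−1} c', t b₀ + (d−a) B_{2l−1} − B_{2l−1}² c'],[c', d − B_{2l−1} c']]`,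
`φ_{j_l} = [[a + B_{2l} c', b₀ + e_l],[c, d − B_{2l} c']]`;
(iv) `φ_m = φ_{m−1}` for every `m ∈ P ∪ ({1,…,n} ∖ (I ∪ J))`.
Here `i, j : ℕ → ℕ` are `0`-indexed, so `i l, j l` for `l < r` are the paper's
`i_{l+1}, j_{l+1}`, and `b (2*l+1), b (2*l+2)` are the paper's `b_{2(l+1)-1}, b_{2(l+1)}`. -/
theorem stmt3
    (n k r : ℕ) (hn : 6 ≤ n) (hr2 : 2 ≤ r) (hrk : r ≤ k) (hkrn : k + r ≤ n)
    (i j : ℕ → ℕ)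
    (hi1 : 1 ≤ i 0) (hjr : j (r - 1) ≤ n)
    (hij : ∀ l, l < r → i l < j l)
    (hji : ∀ l, l + 1 < r → j l < i (l + 1))
    (P : Finset ℕ) (hP : P ⊆ Finset.Icc 1 n)
    (hPcard : P.card = k - r)
    (hPdisj : ∀ l, l < r → i l ∉ P ∧ j l ∉ P)
    (b : ℕ → R) (hb : ∑ m ∈ Finset.Icc 1 (2 * r), b m = 0)
    (x : ZMod n → M2)
    (hxI : ∀ l, l < r → x ((i l : ZMod n)) = !![t, b (2 * l + 1); 0, 1])
    (hxJ : ∀ l, l < r → x ((j l : ZMod n)) = !![1, b (2 * l + 2); 0, t])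
    (hxP : ∀ m ∈ P, x ((m : ZMod n)) = 1)
    (hxO : ∀ m ∈ Finset.Icc 1 n, m ∉ P → (∀ l, l < r → m ≠ i l ∧ m ≠ j l) →
      x ((m : ZMod n)) = t • (1 : M2))
    (φ : ZMod n → M2)
    (hφ : ∀ m : ZMod n, x m * φ (m - 1) = φ m * x m)
    (a b₀ c d : R)
    (hφjr : φ ((j (r - 1) : ZMod n)) = !![a, b₀; c, d]) :
    ∃ c' : R, c = t * c' ∧
      (∀ l, l < r →
        φ ((i l : ZMod n)) =
          !![a + (∑ g ∈ Finset.Icc 1 (2 * l + 1), b g) * c',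
             t * b₀ + (d - a) * (∑ g ∈ Finset.Icc 1 (2 * l + 1), b g)
               - (∑ g ∈ Finset.Icc 1 (2 * l + 1), b g) ^ 2 * c';
             c', d - (∑ g ∈ Finset.Icc 1 (2 * l + 1), b g) * c']) ∧
      (∀ l, l < r → ∃ e : R,
        (d - a) * (∑ g ∈ Finset.Icc 1 (2 * l + 2), b g)
            - (∑ g ∈ Finset.Icc 1 (2 * l + 2), b g) ^ 2 * c' = t * e ∧
        φ ((j l : ZMod n)) =
          !![a + (∑ g ∈ Finset.Icc 1 (2 * l + 2), b g) * c', b₀ + e;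
             c, d - (∑ g ∈ Finset.Icc 1 (2 * l + 2), b g) * c']) ∧
      (∀ m ∈ Finset.Icc 1 n, (m ∈ P ∨ ∀ l, l < r → m ≠ i l ∧ m ≠ j l) →
        φ ((m : ZMod n)) = φ ((m : ZMod n) - 1)) := by
  have hfree : ∀ m ∈ Finset.Icc 1 n, (m ∈ P ∨ ∀ l, l < r → m ≠ i l ∧ m ≠ j l) →
        φ ((m : ZMod n)) = φ ((m : ZMod n) - 1) := by
    intro m hm h
    have h1 := hφ (m : ZMod n)
    by_cases hmP : m ∈ P
    · rw [hxP m hmP] at h1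
      simpa using h1.symm
    · rw [hxO m hm hmP (h.resolve_left hmP)] at h1
      have h2 : t • φ ((m : ZMod n) - 1) = t • φ (m : ZMod n) := by simpa using h1
      refine Matrix.ext fun p q => ?_
      have h3 := congrFun (congrFun h2 p) q
      exact (t_cancel (by simpa using h3)).symm
  have hord : ∀ q p, p < q → q < r → j p < i q := by
    intro q
    induction q with
    | zero => intro p hp; omega
    | succ q ih =>
      intro p hp hq
      have h1 := hji q hq
      rcases Nat.lt_succ_iff_lt_or_eq.mp hp with h | h
      · have := ih p h (by omega)
        have := hij q (by omega)
        omega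
      · subst h; exact h1
  have hjle : ∀ l, l < r → j l ≤ n := by
    intro l hl
    rcases Nat.lt_or_ge l (r - 1) with h | h
    · have := hord (r-1) l h (by omega)
      have := hij (r-1) (by omega)
      omega
    · have : l = r - 1 := by omega
      subst this; exact hjr
  have hconst : ∀ q p : ℕ, p ≤ q → q ≤ n →
      (∀ m, p < m → m ≤ q → ∀ l, l < r → m ≠ i l ∧ m ≠ j l) →
      φ (q : ZMod n) = φ (p : ZMod n) := by
    intro q p hpq
    induction q, hpq using Nat.le_induction with
    | base => intros; rfl
    | succ q hq ih =>
      intro hqn h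
      rw [← ih (by omega) (fun m h1 h2 => h m h1 (by omega))]
      have := hfree (q+1) (by simp; omega) (Or.inr (h (q+1) (by omega) le_rfl))
      rw [this]; congr 1; push_cast; ring
  -- in the gaps
  have hgapI : ∀ l, l < r → φ ((i l : ZMod n) - 1) = φ ((i l - 1 : ℕ) : ZMod n) := by
    intro l hl
    have : 1 ≤ i l := by
      rcases Nat.eq_zero_or_pos l with h | h
      · subst h; exact hi1
      · have := hord l 0 h hl
        omega
    rw [Nat.cast_sub this]; simp
  have hgapIJ : ∀ l, l < r → φ ((j l : ZMod n) - 1) = φ (i l : ZMod n) := by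
    intro l hl
    have h1 := hij l hl
    have hle := hjle l hl
    rw [← hconst (j l - 1) (i l) (by omega) (by omega), Nat.cast_sub (by omega)]
    · simp
    · intro m hm1 hm2 l' hl'
      have h2 := hij l' hl'
      rcases Nat.lt_trichotomy l l' with h | h | h
      · have := hord l' l h hl'
        omega
      · subst h; omega
      · have := hord l l' h hl
        omega
  have hgapJI : ∀ l, l + 1 < r → φ ((i (l+1) : ZMod n) - 1) = φ (j l : ZMod n) := by
    intro l hl
    have h1 := hji l hl
    have h0 := hij (l+1) hl
    have hle := hjle (l+1) hl
    rw [hgapI _ hl]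
    apply hconst _ _ (by omega) (by omega)
    intro m hm1 hm2 l' hl'
    have h2 := hij l' hl'
    rcases Nat.lt_trichotomy l l' with h | h | h
    · rcases Nat.lt_or_ge (l+1) l' with h' | h'
      · have := hord l' (l+1) h' hl'
        omega
      · have : l' = l + 1 := by omega
        subst this; omega
    · subst h; omega
    · have := hord l l' h (by omega)
      have := hij l (by omega)
      omega
  have hgap0 : φ ((i 0 : ZMod n) - 1) = φ (j (r-1) : ZMod n) := by
    have h0 := hij 0 (by omega)
    have hle := hjle 0 (by omega)
    have e1 : φ ((i 0 - 1 : ℕ) : ZMod n) = φ ((0 : ℕ) : ZMod n) := by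
      apply hconst _ _ (by omega) (by omega)
      intro m hm1 hm2 l' hl'
      have h2 := hij l' hl'
      rcases Nat.eq_zero_or_pos l' with h | h
      · subst h; omega
      · have := hord l' 0 h hl'
        omega
    have e2 : φ (n : ZMod n) = φ (j (r-1) : ZMod n) := by
      apply hconst _ _ hjr le_rfl
      intro m hm1 hm2 l' hl'
      have h2 := hij l' hl'
      rcases Nat.lt_or_ge l' (r-1) with h | h
      · have := hord (r-1) l' h (by omega)
        have := hij (r-1) (by omega)
        omega
      · have : l' = r - 1 := by omega
        subst this; omega
    rw [hgapI 0 (by omega), e1, ← e2]; simp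
  have hI : ∀ l, l < r → _ := fun l hl =>
    stepI (φ ((i l : ZMod n) - 1)) (φ (i l : ZMod n)) (b (2*l+1))
      (by rw [← hxI l hl]; exact hφ _)
  have hJ : ∀ l, l < r → _ := fun l hl =>
    stepJ (φ (i l : ZMod n)) (φ (j l : ZMod n)) (b (2*l+2))
      (by rw [← hxJ l hl, ← hgapIJ l hl]; exact hφ _)
  obtain ⟨c', hc'⟩ : ∃ c', c = t * c' := by
    refine ⟨_, (?_ : c = t * φ (i 0 : ZMod n) 1 0)⟩
    rw [← (hI 0 (by omega)).1, hgap0, hφjr]; simp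
  have hs : ∀ N, ∑ g ∈ Finset.Icc 1 (N+1), b g = ∑ g ∈ Finset.Icc 1 N, b g + b (N+1) :=
    fun N => Finset.sum_Icc_succ_top (by omega) _
  -- from the state before `i l` to the states at `i l` and `j l`
  have key1 : ∀ l, l < r → (∃ e : R,
        (d - a) * (∑ g ∈ Finset.Icc 1 (2 * l), b g)
            - (∑ g ∈ Finset.Icc 1 (2 * l), b g) ^ 2 * c' = t * e ∧
        φ ((i l : ZMod n) - 1) =
          !![a + (∑ g ∈ Finset.Icc 1 (2 * l), b g) * c', b₀ + e;
             c, d - (∑ g ∈ Finset.Icc 1 (2 * l), b g) * c']) →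
      φ ((i l : ZMod n)) =
          !![a + (∑ g ∈ Finset.Icc 1 (2 * l + 1), b g) * c',
             t * b₀ + (d - a) * (∑ g ∈ Finset.Icc 1 (2 * l + 1), b g)
               - (∑ g ∈ Finset.Icc 1 (2 * l + 1), b g) ^ 2 * c';
             c', d - (∑ g ∈ Finset.Icc 1 (2 * l + 1), b g) * c'] := by
    rintro l hl ⟨e, he, hm⟩
    obtain ⟨h1, h2⟩ := hI l hl
    rw [hm] at h1 h2
    have h3 : φ (i l : ZMod n) 1 0 = c' := by
      apply t_cancel
      rw [← h1, ← hc']; simp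
    rw [h3] at h2
    rw [h2, hs (2*l)]
    refine Matrix.ext fun p q => ?_
    fin_cases p <;> fin_cases q <;> simp
    · ring
    · linear_combination -he
    · ring
  have key2 : ∀ l, l < r →
      φ ((i l : ZMod n)) =
          !![a + (∑ g ∈ Finset.Icc 1 (2 * l + 1), b g) * c',
             t * b₀ + (d - a) * (∑ g ∈ Finset.Icc 1 (2 * l + 1), b g)
               - (∑ g ∈ Finset.Icc 1 (2 * l + 1), b g) ^ 2 * c';
             c', d - (∑ g ∈ Finset.Icc 1 (2 * l + 1), b g) * c'] →
      ∃ e : R,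
        (d - a) * (∑ g ∈ Finset.Icc 1 (2 * l + 2), b g)
            - (∑ g ∈ Finset.Icc 1 (2 * l + 2), b g) ^ 2 * c' = t * e ∧
        φ ((j l : ZMod n)) =
          !![a + (∑ g ∈ Finset.Icc 1 (2 * l + 2), b g) * c', b₀ + e;
             c, d - (∑ g ∈ Finset.Icc 1 (2 * l + 2), b g) * c'] := by
    intro l hl hm
    obtain ⟨h1, h2⟩ := hJ l hl
    rw [hm] at h1 h2
    simp at h1
    refine ⟨φ (j l : ZMod n) 0 1 - b₀, ?_, ?_⟩
    · rw [hs (2*l+1)]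
      linear_combination -h1
    · rw [hs (2*l+1), hc']
      refine h2.trans ?_
      refine Matrix.ext fun p q => ?_
      fin_cases p <;> fin_cases q <;> simp
      · ring
      · ring
  have main : ∀ l, l < r → ∃ e : R,
        (d - a) * (∑ g ∈ Finset.Icc 1 (2 * l), b g)
            - (∑ g ∈ Finset.Icc 1 (2 * l), b g) ^ 2 * c' = t * e ∧
        φ ((i l : ZMod n) - 1) =
          !![a + (∑ g ∈ Finset.Icc 1 (2 * l), b g) * c', b₀ + e;
             c, d - (∑ g ∈ Finset.Icc 1 (2 * l), b g) * c'] := by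
    intro l
    induction l with
    | zero =>
      intro _
      refine ⟨0, by simp, ?_⟩
      rw [hgap0, hφjr]; simp
    | succ l ih =>
      intro hl
      have h := key2 l (by omega) (key1 l (by omega) (ih (by omega)))
      rw [hgapJI l hl]
      exact h
  exact ⟨c', hc', fun l hl => key1 l hl (main l hl),
    fun l hl => key2 l hl (key1 l hl (main l hl)), hfree⟩

end
end

section
/- (Splitting-off criterion for the submodule L_J, from Section 3) The following are equivalent: (1) t divides b_i + b_{i+1} for every odd i ∈ {1, 3, …, 2r−1}; (2) there exist α_1, …, α_{2r} ∈ R (indices read modulo 2r) satisfying α_i = b_{i+1} + t·α_{i+1} for every odd i and t·α_i = b_{i+1} + α_{i+1} for every even i. (Condition (2) says that the row vectors μ_i = [1, α_i] define a retraction of the inclusion of L_J into 𝕄(I,J), i.e. L_J is a direct summand of 𝕄(I,J).) -/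
open PowerSeries

noncomputable section

/-- (Splitting-off criterion for the submodule `L_J`, from Section 3.)
In the case `(k, n) = (r, 2r)` with `I = {1,3,…,2r−1}`, `J = {2,4,…,2r}`, and
`b : ZMod 2r → ℂ[[t]]` with `b_1 + ⋯ + b_{2r} = 0` (indices modulo `2r`), the
following are equivalent:
(1) `t ∣ b_i + b_{i+1}` for every odd `i`;
(2) there exist `α_i ∈ ℂ[[t]]` (`i ∈ ℤ/2r`) with `α_i = b_{i+1} + t·α_{i+1}` for
every odd `i` and `t·α_i = b_{i+1} + α_{i+1}` for every even `i`
(i.e. the rows `μ_i = [1, α_i]` define a retraction of `L_J ↪ 𝕄(I,J)`, so `L_J`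
is a direct summand of `𝕄(I,J)`). -/
theorem stmt9 (r : ℕ) (hr : 2 ≤ r) (b : ZMod (2 * r) → R)
    (hb : ∑ m ∈ Finset.range (2 * r), b ((m : ZMod (2 * r))) = 0) :
    (∀ i : ZMod (2 * r), Odd i.val → t ∣ (b i + b (i + 1))) ↔
    (∃ α : ZMod (2 * r) → R, ∀ i : ZMod (2 * r),
      (Odd i.val → α i = b (i + 1) + t * α (i + 1)) ∧
      (Even i.val → t * α i = b (i + 1) + α (i + 1))) := by
  have hr0 : 2 * r ≠ 0 := by omega
  haveI : NeZero (2 * r) := ⟨hr0⟩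
  have hval : ∀ i : ZMod (2 * r),
      (i.val + 1 < 2 * r ∧ (i + 1).val = i.val + 1) ∨ (i.val + 1 = 2 * r ∧ (i + 1).val = 0) := by
    intro i
    have hlt := ZMod.val_lt i
    have h1 : (i + 1).val = (i.val + 1) % (2 * r) := by
      have : i + 1 = ((i.val + 1 : ℕ) : ZMod (2 * r)) := by
        push_cast
        rw [ZMod.natCast_zmod_val]
      rw [this, ZMod.val_natCast]
    rcases Nat.lt_or_ge (i.val + 1) (2 * r) with h | h
    · left
      exact ⟨h, by rw [h1, Nat.mod_eq_of_lt h]⟩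
    · right
      have h2 : i.val + 1 = 2 * r := by omega
      exact ⟨h2, by rw [h1, h2, Nat.mod_self]⟩
  constructor
  · intro h
    let T : ℕ → R := fun n => ∑ m ∈ Finset.range n, b ((m + 1 : ℕ) : ZMod (2 * r))
    have hTs : ∀ n, T (n + 1) = T n + b ((n + 1 : ℕ) : ZMod (2 * r)) := fun n =>
      Finset.sum_range_succ _ n
    have hT0 : T 0 = 0 := Finset.sum_range_zero _
    have hTr : T (2 * r) = 0 := by
      have e1 := Finset.sum_range_succ (fun m : ℕ => b (m : ZMod (2 * r))) (2 * r)
      have e2 := Finset.sum_range_succ' (fun m : ℕ => b (m : ZMod (2 * r))) (2 * r)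
      rw [e1, hb] at e2
      rw [ZMod.natCast_self, Nat.cast_zero] at e2
      change 0 + b 0 = T (2 * r) + b 0 at e2
      exact (add_right_cancel e2).symm
    have hdiv : ∀ k, t ∣ T (2 * k) := by
      intro k
      induction k with
      | zero => rw [Nat.mul_zero, hT0]; exact dvd_zero _
      | succ k ih =>
        have ho : Odd ((2 * k + 1 : ℕ) : ZMod (2 * r)).val := by
          rw [ZMod.val_natCast, Nat.odd_iff, Nat.mod_mul_right_mod]
          omega
        have h3 := h _ ho
        have e : T (2 * (k + 1)) = T (2 * k) + (b ((2 * k + 1 : ℕ) : ZMod (2 * r)) +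
            b (((2 * k + 1 : ℕ) : ZMod (2 * r)) + 1)) := by
          have : 2 * (k + 1) = 2 * k + 1 + 1 := by ring
          rw [this, hTs, hTs, add_assoc, Nat.cast_succ (2 * k + 1)]
        rw [e]
        exact dvd_add ih h3
    choose c hc using hdiv
    have hS : ∀ i : ZMod (2 * r), T (i + 1).val = T i.val + b (i + 1) := by
      intro i
      have e : T (i.val + 1) = T i.val + b (i + 1) := by
        rw [hTs]
        push_cast
        rw [ZMod.natCast_zmod_val]
      rcases hval i with ⟨_, h2⟩ | ⟨h1, h2⟩
      · rw [h2, e]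
      · rw [h2, hT0, ← e, h1, hTr]
    let α : ZMod (2 * r) → R := fun i => if Even i.val then - c (i.val / 2) else - T i.val
    have hαe : ∀ i : ZMod (2 * r), Even i.val → t * α i = - T i.val := by
      intro i hi
      have e1 : α i = - c (i.val / 2) := if_pos hi
      have e2 := hc (i.val / 2)
      rw [Nat.two_mul_div_two_of_even hi] at e2
      rw [e1, e2, mul_neg]
    have hαo : ∀ i : ZMod (2 * r), Odd i.val → α i = - T i.val := by
      intro i hi
      exact if_neg (Nat.not_even_iff_odd.mpr hi)
    refine ⟨α, fun i => ⟨fun hi => ?_, fun hi => ?_⟩⟩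
    · have h1 : Even (i + 1).val := by
        rw [Nat.odd_iff] at hi
        rw [Nat.even_iff]
        rcases hval i with h | h <;> omega
      rw [hαo i hi, hαe _ h1, hS]
      ring
    · have h1 : Odd (i + 1).val := by
        rw [Nat.even_iff] at hi
        rw [Nat.odd_iff]
        rcases hval i with h | h <;> omega
      rw [hαe i hi, hαo _ h1, hS]
      ring
  · rintro ⟨α, hα⟩ i hi
    have h1 : Even (i - 1).val := by
      rw [Nat.odd_iff] at hi
      rw [Nat.even_iff]
      have := hval (i - 1)
      rw [sub_add_cancel] at this
      rcases this with h | h <;> omega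
    have e1 := (hα i).1 hi
    have e2 := (hα (i - 1)).2 h1
    rw [sub_add_cancel] at e2
    exact ⟨α (i - 1) - α (i + 1), by linear_combination -e1 - e2⟩

end
end

section
/- (Theorem 3.7, explicit decomposition of 𝕄(I,J)) Let X' be a subset of the set of even residues of ℤ/2r (the peaks of I) with 1 ≤ |X'| ≤ r − 1. Assume (all indices modulo 2r): (i) for every even residue j, t divides b_{j+1} + b_{j+2} if and only if (j ∈ X' ⇔ j+2 ∈ X'); and (ii) whenever j and j' are even residues with t ∤ b_{j+1}+b_{j+2} and t ∤ b_{j'+1}+b_{j'+2} such that t divides b_{l+1}+b_{l+2} for every even residue l lying cyclically strictly between j and j', then t divides (b_{j+1}+b_{j+2}) + (b_{j'+1}+b_{j'+2}). Define subsets X, Y of ℤ/2r by: for every even residue j, j+1 ∈ X ⇔ j ∈ X' and j+2 ∈ X ⇔ j+2 ∉ X', while j+1 ∈ Y ⇔ j ∉ X' and j+2 ∈ Y ⇔ j+2 ∈ X'. Then 𝕄(I,J) is isomorphic to the direct sum L_X ⊕ L_Y; concretely, there exist vectors w_i, v_i ∈ R² for i ∈ ℤ/2r such that for every i the 2×2 matrix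 with columns w_i and v_i is invertible over R, and for every i: x_{i+1}·w_i = w_{i+1} if i+1 ∈ X and x_{i+1}·w_i = t·w_{i+1} if i+1 ∉ X, while x_{i+1}·v_i = v_{i+1} if i+1 ∈ Y and x_{i+1}·v_i = t·v_{i+1} if i+1 ∉ Y. -/
open PowerSeries Matrix

noncomputable section

theorem aux_comb (P : ℕ → Prop) (c : ℕ → ℂ)
    (h1 : ∀ n, c (n + 1) = c n ↔ (P n ↔ P (n + 1)))
    (h2 : ∀ l n, l < n → c (l + 1) ≠ c l → c (n + 1) ≠ c n →
      (∀ m, l < m → m < n → c (m + 1) = c m) → (c (l + 1) - c l) + (c (n + 1) - c n) = 0)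
    (n0 : ℕ) (h0 : ¬ (P n0 ↔ P (n0 + 1))) (k : ℕ) :
    ((P (n0 + 1 + k) ↔ P n0) → c (n0 + 1 + k) = c n0) ∧
    (¬ (P (n0 + 1 + k) ↔ P n0) → c (n0 + 1 + k) = c (n0 + 1)) := by
  have key : ∀ k : ℕ, ∃ l, l < n0 + 1 + k ∧ ¬ (P l ↔ P (l + 1)) ∧
      (P (n0 + 1 + k) ↔ P (l + 1)) ∧ c (n0 + 1 + k) = c (l + 1) ∧
      (∀ m, l < m → m < n0 + 1 + k → c (m + 1) = c m) ∧
      ((P l ↔ P n0) → c l = c n0) ∧ (¬ (P l ↔ P n0) → c l = c (n0 + 1)) ∧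
      ((P (n0 + 1 + k) ↔ P n0) → c (n0 + 1 + k) = c n0) ∧
      (¬ (P (n0 + 1 + k) ↔ P n0) → c (n0 + 1 + k) = c (n0 + 1)) := by
    intro k
    induction k with
    | zero =>
      refine ⟨n0, by omega, h0, Iff.rfl, rfl, fun m _ _ => by omega, fun _ => rfl, ?_, ?_, fun _ => rfl⟩
      · intro h; exact absurd Iff.rfl h
      · intro h; exact absurd h.symm h0
    | succ k ih =>
      obtain ⟨l, hl, hP, hPn, hc, hm, hl1, hl2, hn1, hn2⟩ := ih
      rw [← add_assoc (n0 + 1) k 1]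
      generalize n0 + 1 + k = n at *
      by_cases hch : P n ↔ P (n + 1)
      · have hcc := (h1 n).2 hch
        refine ⟨l, by omega, hP, hch.symm.trans hPn, by rw [hcc, hc], ?_, hl1, hl2, ?_, ?_⟩
        · intro m h3 h4
          rcases Nat.lt_succ_iff_lt_or_eq.1 h4 with h5 | h5
          · exact hm m h3 h5
          · rw [h5]; exact hcc
        · rw [hcc, ← hch]; exact hn1
        · rw [hcc, ← hch]; exact hn2
      · have e := h2 l n hl (fun h => hP ((h1 l).1 h)) (fun h => hch ((h1 n).1 h)) hm
        have e2 : c (n + 1) = c l := by rw [hc] at e; linear_combination e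
        have e3 : P (n + 1) ↔ P l := by clear * - hch hP hPn; tauto
        refine ⟨n, by omega, hch, Iff.rfl, rfl, fun m _ _ => by omega, hn1, hn2, ?_, ?_⟩
        · rw [e2, e3]; exact hl1
        · rw [e2, e3]; exact hl2
  obtain ⟨l, _, _, _, _, _, _, _, a, b⟩ := key k
  exact ⟨a, b⟩

theorem aux_val (r : ℕ) (n : ℕ) : Even ((n : ZMod (2 * r)).val) ↔ Even n := by
  rw [ZMod.val_natCast, Nat.even_iff, Nat.even_iff, Nat.mod_mul_right_mod]

theorem aux_t (a : R) : t ∣ a ↔ PowerSeries.constantCoeff a = 0 := PowerSeries.X_dvd_iff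

theorem aux_mv (a b d p q p' q' : R) (h1 : a * p + b * q = p') (h2 : d * q = q') :
    (!![a, b; 0, d]).mulVec ![p, q] = ![p', q'] := by
  subst h1 h2
  ext1 k
  fin_cases k <;> simp [Matrix.mulVec, dotProduct, Fin.sum_univ_two]

theorem aux_mv2 (a b d p q p' q' : R) (h1 : a * p + b * q = t * p') (h2 : d * q = t * q') :
    (!![a, b; 0, d]).mulVec ![p, q] = t • ![p', q'] := by
  rw [aux_mv a b d p q _ _ h1 h2]
  ext1 k
  fin_cases k <;> simp

theorem aux_sigma (r : ℕ) (hr : 2 ≤ r) (b : ZMod (2 * r) → R)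
    (hb : ∑ m ∈ Finset.range (2 * r), b ((m : ZMod (2 * r))) = 0) :
    ∃ s : ZMod (2 * r) → R, ∀ i, s (i + 1) = s i + b (i + 1) := by
  have : NeZero (2 * r) := ⟨by omega⟩
  refine ⟨fun i => ∑ m ∈ Finset.range (i.val + 1), b (m : ZMod (2 * r)), fun i => ?_⟩
  have hi := ZMod.val_lt i
  have hi' : ((i.val : ℕ) : ZMod (2 * r)) = i := ZMod.natCast_zmod_val i
  have hv : (i + 1).val = (i.val + 1) % (2 * r) := by
    rw [← ZMod.val_natCast]; push_cast; rw [hi']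
  by_cases h : i.val + 1 < 2 * r
  · rw [Nat.mod_eq_of_lt h] at hv
    simp only [hv]
    rw [Finset.sum_range_succ]
    push_cast; rw [hi']
  · have h' : i.val + 1 = 2 * r := by omega
    have h0 : i + 1 = 0 := by
      rw [← hi', ← Nat.cast_one, ← Nat.cast_add, h']; exact ZMod.natCast_self _
    simp only [h0, h', hb]
    simp

/-- (Theorem 3.7, explicit decomposition of `𝕄(I,J)`.)  In the case
`(k, n) = (r, 2r)` with `I = {1,3,…,2r−1}` (odd residues of `ℤ/2r`),
`J = {2,4,…,2r}` (even residues), arrow matrices `x_i = [[t, b_i],[0, 1]]` for odd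
`i`, `x_i = [[1, b_i],[0, t]]` for even `i`, and `b_1 + ⋯ + b_{2r} = 0`: let `X'`
be a set of even residues (peaks of `I`) with `1 ≤ |X'| ≤ r − 1`, and assume
(i) for every even `j`, `t ∣ b_{j+1} + b_{j+2}` iff (`j ∈ X'` ⇔ `j+2 ∈ X'`); and
(ii) whenever `j, j'` are even with `t ∤ b_{j+1}+b_{j+2}`, `t ∤ b_{j'+1}+b_{j'+2}`,
and `t ∣ b_{l+1}+b_{l+2}` for every even `l` lying cyclically strictly between `j`
and `j'` (i.e. `l = j + 2m` with `m ≥ 1` and `j'` not among `j+2,…,j+2m`), then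
`t ∣ (b_{j+1}+b_{j+2}) + (b_{j'+1}+b_{j'+2})`.
Define `X, Y ⊆ ℤ/2r` by: for even `j`, `j+1 ∈ X ⇔ j ∈ X'`, `j+2 ∈ X ⇔ j+2 ∉ X'`,
`j+1 ∈ Y ⇔ j ∉ X'`, `j+2 ∈ Y ⇔ j+2 ∈ X'`.  Then `𝕄(I,J) ≅ L_X ⊕ L_Y`:
concretely, there are vectors `w_i, v_i ∈ R²` such that the matrix with columns
`w_i, v_i` is invertible for every `i`, and `x_{i+1}·w_i = w_{i+1}` if `i+1 ∈ X`,
`x_{i+1}·w_i = t·w_{i+1}` if `i+1 ∉ X`, `x_{i+1}·v_i = v_{i+1}` if `i+1 ∈ Y`, and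
`x_{i+1}·v_i = t·v_{i+1}` if `i+1 ∉ Y`. -/
theorem stmt10 (r : ℕ) (hr : 2 ≤ r) (b : ZMod (2 * r) → R)
    (hb : ∑ m ∈ Finset.range (2 * r), b ((m : ZMod (2 * r))) = 0)
    (x : ZMod (2 * r) → M2)
    (hxodd : ∀ i : ZMod (2 * r), Odd i.val → x i = !![t, b i; 0, 1])
    (hxeven : ∀ i : ZMod (2 * r), Even i.val → x i = !![1, b i; 0, t])
    (X' : Finset (ZMod (2 * r)))
    (hX'even : ∀ j ∈ X', Even (ZMod.val j))
    (hcard1 : 1 ≤ X'.card) (hcard2 : X'.card ≤ r - 1)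
    (hi : ∀ j : ZMod (2 * r), Even j.val →
      ((t ∣ (b (j + 1) + b (j + 2))) ↔ (j ∈ X' ↔ j + 2 ∈ X')))
    (hii : ∀ j j' : ZMod (2 * r), Even j.val → Even j'.val →
      ¬ t ∣ (b (j + 1) + b (j + 2)) → ¬ t ∣ (b (j' + 1) + b (j' + 2)) →
      (∀ m : ℕ, 1 ≤ m →
        (∀ m' : ℕ, 1 ≤ m' → m' ≤ m → j + ((2 * m' : ℕ) : ZMod (2 * r)) ≠ j') →
        t ∣ (b (j + ((2 * m : ℕ) : ZMod (2 * r)) + 1)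
              + b (j + ((2 * m : ℕ) : ZMod (2 * r)) + 2))) →
      t ∣ ((b (j + 1) + b (j + 2)) + (b (j' + 1) + b (j' + 2))))
    (X Y : Finset (ZMod (2 * r)))
    (hXdef : ∀ j : ZMod (2 * r), Even j.val →
      ((j + 1 ∈ X ↔ j ∈ X') ∧ (j + 2 ∈ X ↔ j + 2 ∉ X')))
    (hYdef : ∀ j : ZMod (2 * r), Even j.val →
      ((j + 1 ∈ Y ↔ j ∉ X') ∧ (j + 2 ∈ Y ↔ j + 2 ∈ X'))) :
    ∃ w v : ZMod (2 * r) → Fin 2 → R,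
      (∀ i : ZMod (2 * r), IsUnit ((Matrix.of ![w i, v i])ᵀ.det)) ∧
      (∀ i : ZMod (2 * r),
        (i + 1 ∈ X → (x (i + 1)).mulVec (w i) = w (i + 1)) ∧
        (i + 1 ∉ X → (x (i + 1)).mulVec (w i) = t • w (i + 1)) ∧
        (i + 1 ∈ Y → (x (i + 1)).mulVec (v i) = v (i + 1)) ∧
        (i + 1 ∉ Y → (x (i + 1)).mulVec (v i) = t • v (i + 1))) := by
  classical
  have : NeZero (2 * r) := ⟨by omega⟩
  obtain ⟨s, hs⟩ := aux_sigma r hr b hb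
  have hs2 : ∀ i, s (i + 2) - s i = b (i + 1) + b (i + 2) := by
    intro i
    have h1 := hs i
    have h2 := hs (i + 1)
    rw [add_assoc, one_add_one_eq_two] at h2
    rw [h2, h1]; ring
  have hcast : ∀ i : ZMod (2 * r), Even i.val → ∀ q : ℕ,
      ((2 * (i.val / 2 + r * q) : ℕ) : ZMod (2 * r)) = i := by
    intro i hi q
    have : 2 * (i.val / 2 + r * q) = i.val + (2 * r) * q := by
      have := Nat.two_mul_div_two_of_even hi
      rw [mul_add, this]; ring
    rw [this, Nat.cast_add, Nat.cast_mul, ZMod.natCast_self, ZMod.natCast_zmod_val]; ring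
  have hev : ∀ n : ℕ, Even ((((2 * n : ℕ) : ZMod (2 * r))).val) := fun n =>
    (aux_val r _).2 (even_two_mul n)
  have hstep : ∀ n : ℕ, ((2 * (n + 1) : ℕ) : ZMod (2 * r)) = ((2 * n : ℕ) : ZMod (2 * r)) + 2 := by
    intro n; push_cast; ring
  let P : ℕ → Prop := fun n => ((2 * n : ℕ) : ZMod (2 * r)) ∈ X'
  let c : ℕ → ℂ := fun n => PowerSeries.constantCoeff (s ((2 * n : ℕ) : ZMod (2 * r)))
  have hcd : ∀ n, c (n + 1) - c n = PowerSeries.constantCoeff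
      (b (((2 * n : ℕ) : ZMod (2 * r)) + 1) + b (((2 * n : ℕ) : ZMod (2 * r)) + 2)) := by
    intro n
    rw [← hs2, map_sub]
    simp only [c, hstep]
  have hct : ∀ n, c (n + 1) = c n ↔ t ∣
      (b (((2 * n : ℕ) : ZMod (2 * r)) + 1) + b (((2 * n : ℕ) : ZMod (2 * r)) + 2)) := by
    intro n
    rw [aux_t, ← hcd, sub_eq_zero]
  have h1 : ∀ n, c (n + 1) = c n ↔ (P n ↔ P (n + 1)) := by
    intro n
    rw [hct, hi _ (hev n)]
    simp only [P, hstep]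
  have h2 : ∀ l n, l < n → c (l + 1) ≠ c l → c (n + 1) ≠ c n →
      (∀ m, l < m → m < n → c (m + 1) = c m) → (c (l + 1) - c l) + (c (n + 1) - c n) = 0 := by
    intro l n hln hl hn hm
    rw [hcd, hcd, ← map_add, ← aux_t]
    refine hii _ _ (hev l) (hev n) (fun h => hl ((hct l).2 h)) (fun h => hn ((hct n).2 h)) ?_
    intro m hm1 hm2
    have e : ∀ m : ℕ, ((2 * l : ℕ) : ZMod (2 * r)) + ((2 * m : ℕ) : ZMod (2 * r))
        = ((2 * (l + m) : ℕ) : ZMod (2 * r)) := by intro m; push_cast; ring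
    have hlt : l + m < n := by
      by_contra hcon
      refine hm2 (n - l) (by omega) (by omega) ?_
      rw [e, Nat.add_sub_cancel' hln.le]
    rw [e]
    exact (hct _).1 (hm _ (by omega) hlt)
  have hex : ∃ n0, ¬ (P n0 ↔ P (n0 + 1)) := by
    by_contra hcon
    push Not at hcon
    have hall : ∀ n, P n ↔ P 0 := by
      intro n
      induction n with
      | zero => exact Iff.rfl
      | succ n ih => exact (hcon n).symm.trans ih
    obtain ⟨j, hj⟩ := Finset.card_pos.1 hcard1
    have hPj : P (j.val / 2 + r * 0) := by
      change _ ∈ X'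
      rw [hcast j (hX'even j hj)]; exact hj
    have hP0 := (hall _).1 hPj
    have hle : (Finset.range r).card ≤ X'.card := by
      refine Finset.card_le_card_of_injOn (fun n => ((2 * n : ℕ) : ZMod (2 * r))) ?_ ?_
      · intro n _; exact (hall n).2 hP0
      · intro a ha d hd h
        have ha' := Finset.mem_range.1 (Finset.mem_coe.1 ha)
        have hd' := Finset.mem_range.1 (Finset.mem_coe.1 hd)
        have h' := congrArg ZMod.val h
        simp only [ZMod.val_natCast] at h'
        rw [Nat.mod_eq_of_lt (by omega), Nat.mod_eq_of_lt (by omega)] at h'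
        omega
    rw [Finset.card_range] at hle
    omega
  obtain ⟨n0, h0⟩ := hex
  have hcomb := aux_comb P c h1 h2 n0 h0
  have hne : c (n0 + 1) ≠ c n0 := fun h => h0 ((h1 n0).1 h)
  have hkl : ∃ κ l : ℂ, l - κ ≠ 0 ∧ ∀ i : ZMod (2 * r), Even i.val →
      (i ∈ X' → PowerSeries.constantCoeff (s i) = κ) ∧
      (i ∉ X' → PowerSeries.constantCoeff (s i) = l) := by
    have hi2 : ∀ i : ZMod (2 * r), Even i.val →
      ((i ∈ X' ↔ P n0) → PowerSeries.constantCoeff (s i) = c n0) ∧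
      (¬ (i ∈ X' ↔ P n0) → PowerSeries.constantCoeff (s i) = c (n0 + 1)) := by
      intro i hie
      have hge : n0 + 1 ≤ i.val / 2 + r * (n0 + 1) := by
        have := Nat.le_mul_of_pos_left (n0 + 1) (show 0 < r by omega)
        omega
      obtain ⟨k, hk⟩ := Nat.exists_eq_add_of_le hge
      have hh := hcomb k
      rw [← hk] at hh
      simp only [P, c, hcast i hie] at hh
      exact hh
    by_cases hp : P n0
    · refine ⟨c n0, c (n0 + 1), sub_ne_zero.2 hne, fun i hie => ⟨fun h => ?_, fun h => ?_⟩⟩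
      · exact (hi2 i hie).1 (by tauto)
      · exact (hi2 i hie).2 (by tauto)
    · refine ⟨c (n0 + 1), c n0, sub_ne_zero.2 hne.symm, fun i hie => ⟨fun h => ?_, fun h => ?_⟩⟩
      · exact (hi2 i hie).2 (by tauto)
      · exact (hi2 i hie).1 (by tauto)
  obtain ⟨κ₀, l₀, hkl0, hkl⟩ := hkl
  obtain ⟨κ, hκ⟩ : ∃ κ : R, κ = PowerSeries.C κ₀ := ⟨_, rfl⟩
  obtain ⟨l, hl⟩ : ∃ l : R, l = PowerSeries.C l₀ := ⟨_, rfl⟩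
  have hunit : IsUnit (l - κ) := by
    rw [hκ, hl, ← map_sub]
    exact (IsUnit.mk0 _ hkl0).map PowerSeries.C
  have hq : ∀ i : ZMod (2 * r), ∃ q : R, Even i.val →
      (i ∈ X' → s i - κ = t * q) ∧ (i ∉ X' → s i - l = t * q) := by
    intro i
    by_cases hie : Even i.val
    · by_cases hiX : i ∈ X'
      · have : t ∣ s i - κ := by
          rw [aux_t, map_sub, (hkl i hie).1 hiX, hκ, PowerSeries.constantCoeff_C, sub_self]
        obtain ⟨q, hq⟩ := this
        exact ⟨q, fun _ => ⟨fun _ => hq, fun h => absurd hiX h⟩⟩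
      · have : t ∣ s i - l := by
          rw [aux_t, map_sub, (hkl i hie).2 hiX, hl, PowerSeries.constantCoeff_C, sub_self]
        obtain ⟨q, hq⟩ := this
        exact ⟨q, fun _ => ⟨fun h => absurd h hiX, fun _ => hq⟩⟩
    · exact ⟨0, fun h => absurd h hie⟩
  choose q hq using hq
  have hpar : ∀ i : ZMod (2 * r), Even (i + 1).val ↔ ¬ Even i.val := by
    intro i
    have := aux_val r (i.val + 1)
    rw [Nat.cast_add, ZMod.natCast_zmod_val, Nat.cast_one] at this
    rw [this, Nat.even_add_one]
  refine ⟨fun i => if Even i.val then (if i ∈ X' then ![q i, 1] else ![s i - κ, t])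
      else ![s i - κ, 1],
    fun i => if Even i.val then (if i ∈ X' then ![s i - l, t] else ![q i, 1])
      else ![s i - l, 1], ?_, ?_⟩
  · intro i
    have : ∀ u z : Fin 2 → R, (Matrix.of ![u, z])ᵀ.det = u 0 * z 1 - z 0 * u 1 := by
      intro u z
      simp [Matrix.det_fin_two]
      ring
    rw [this]
    convert hunit using 1
    by_cases hie : Even i.val
    · by_cases hiX : i ∈ X'
      · simp only [hie, hiX, if_true]
        simp
        linear_combination -((hq i hie).1 hiX)
      · simp only [hie, hiX, if_true, if_false]
        simp
        linear_combination ((hq i hie).2 hiX)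
    · simp only [hie, if_false]
      simp
  · intro i
    by_cases hie : Even i.val
    · have hio : ¬ Even (i + 1).val := by rw [hpar]; tauto
      rw [hxodd _ (Nat.not_even_iff_odd.1 hio)]
      have hX := (hXdef i hie).1
      have hY := (hYdef i hie).1
      have hsi := hs i
      have hqi := hq i hie
      by_cases hiX : i ∈ X'
      · have e := hqi.1 hiX
        simp only [hX, hY, hie, hio, hiX, if_true, if_false]
        refine ⟨fun _ => ?_, fun h => absurd trivial h, fun h => absurd h (not_not.2 trivial), fun _ => ?_⟩
        · exact aux_mv _ _ _ _ _ _ _ (by linear_combination (-1 : R) * e - hsi) (by ring)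
        · exact aux_mv2 _ _ _ _ _ _ _ (by linear_combination (-t) * hsi) (by ring)
      · have e := hqi.2 hiX
        simp only [hX, hY, hie, hio, hiX, if_true, if_false]
        refine ⟨fun h => absurd h not_false, fun _ => ?_, fun _ => ?_, fun h => absurd not_false h⟩
        · exact aux_mv2 _ _ _ _ _ _ _ (by linear_combination (-t) * hsi) (by ring)
        · exact aux_mv _ _ _ _ _ _ _ (by linear_combination (-1 : R) * e - hsi) (by ring)
    · have hio : Even (i + 1).val := by rw [hpar]; tauto
      rw [hxeven _ hio]
      have hX : i + 1 ∈ X ↔ i + 1 ∉ X' := by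
        have h := (hXdef (i - 1) ?_).2
        · rwa [show i - 1 + 2 = i + 1 by ring] at h
        · have := hpar (i - 1)
          rw [sub_add_cancel] at this; tauto
      have hY : i + 1 ∈ Y ↔ i + 1 ∈ X' := by
        have h := (hYdef (i - 1) ?_).2
        · rwa [show i - 1 + 2 = i + 1 by ring] at h
        · have := hpar (i - 1)
          rw [sub_add_cancel] at this; tauto
      have hsi := hs i
      have hqi := hq (i + 1) hio
      by_cases hiX : i + 1 ∈ X'
      · have e := hqi.1 hiX
        simp only [hX, hY, hie, hio, hiX, if_true, if_false]
        refine ⟨fun h => absurd trivial h, fun _ => ?_, fun _ => ?_, fun h => absurd trivial h⟩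
        · exact aux_mv2 _ _ _ _ _ _ _ (by linear_combination e - hsi) (by ring)
        · exact aux_mv _ _ _ _ _ _ _ (by linear_combination -hsi) (by ring)
      · have e := hqi.2 hiX
        simp only [hX, hY, hie, hio, hiX, if_true, if_false]
        refine ⟨fun _ => ?_, fun h => absurd not_false h, fun h => absurd h not_false, fun _ => ?_⟩
        · exact aux_mv _ _ _ _ _ _ _ (by linear_combination -hsi) (by ring)
        · exact aux_mv2 _ _ _ _ _ _ _ (by linear_combination e - hsi) (by ring)

end
end

section
/- (Full splitting case, from Section 3) If t divides b_i + b_{i+1} for every odd i ∈ {1, 3, …, 2r−1}, then 𝕄(I,J) is isomorphic to L_I ⊕ L_J; concretely, there exist vectors w_i, v_i ∈ R² for i ∈ ℤ/2r such that for every i the 2×2 matrix with columns w_i and v_i is invertible over R, and for every i: x_{i+1}·w_i = w_{i+1} if i+1 is even (i.e. i+1 ∈ J) and x_{i+1}·w_i = t·w_{i+1} if i+1 is odd, while x_{i+1}·v_i = v_{i+1} if i+1 is odd (i.e. i+1 ∈ I) and x_{i+1}·v_i = t·v_{i+1} if i+1 is even. -/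
open PowerSeries Matrix

noncomputable section

/-- (Full splitting case, from Section 3.)  In the case `(k, n) = (r, 2r)` with
`I = {1,3,…,2r−1}` (odd residues), `J = {2,4,…,2r}` (even residues), arrow matrices
`x_i = [[t, b_i],[0, 1]]` for odd `i`, `x_i = [[1, b_i],[0, t]]` for even `i`, and
`b_1 + ⋯ + b_{2r} = 0`: if `t ∣ b_i + b_{i+1}` for every odd `i`, then
`𝕄(I,J) ≅ L_I ⊕ L_J`.  Concretely, there are vectors `w_i, v_i ∈ R²` such that the
matrix with columns `w_i, v_i` is invertible for every `i`, and `x_{i+1}·w_i` equals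
`w_{i+1}` if `i+1 ∈ J` (even) and `t·w_{i+1}` if `i+1 ∉ J`, while `x_{i+1}·v_i`
equals `v_{i+1}` if `i+1 ∈ I` (odd) and `t·v_{i+1}` if `i+1 ∉ I`. -/
theorem stmt11 (r : ℕ) (hr : 2 ≤ r) (b : ZMod (2 * r) → R)
    (hb : ∑ m ∈ Finset.range (2 * r), b ((m : ZMod (2 * r))) = 0)
    (x : ZMod (2 * r) → M2)
    (hxodd : ∀ i : ZMod (2 * r), Odd i.val → x i = !![t, b i; 0, 1])
    (hxeven : ∀ i : ZMod (2 * r), Even i.val → x i = !![1, b i; 0, t])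
    (hdvd : ∀ i : ZMod (2 * r), Odd i.val → t ∣ (b i + b (i + 1))) :
    ∃ w v : ZMod (2 * r) → Fin 2 → R,
      (∀ i : ZMod (2 * r), IsUnit ((Matrix.of ![w i, v i])ᵀ.det)) ∧
      (∀ i : ZMod (2 * r),
        (Even (i + 1).val → (x (i + 1)).mulVec (w i) = w (i + 1)) ∧
        (Odd (i + 1).val → (x (i + 1)).mulVec (w i) = t • w (i + 1)) ∧
        (Odd (i + 1).val → (x (i + 1)).mulVec (v i) = v (i + 1)) ∧
        (Even (i + 1).val → (x (i + 1)).mulVec (v i) = t • v (i + 1))) := by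
  haveI : NeZero (2 * r) := ⟨by omega⟩
  obtain ⟨S, hS⟩ : ∃ S : ℕ → R, ∀ n, S n =
    ∑ m ∈ Finset.range n, b ((m : ZMod (2 * r)) + 1) := ⟨_, fun _ => rfl⟩
  have hS0 : S 0 = 0 := by simp [hS]
  have hSs : ∀ n, S (n + 1) = S n + b ((n : ZMod (2 * r)) + 1) := by
    intro n; rw [hS, hS, Finset.sum_range_succ]
  have hSr : S (2 * r) = 0 := by
    have h1 := Finset.sum_range_succ (fun m : ℕ => b (m : ZMod (2 * r))) (2 * r)
    have h2 := Finset.sum_range_succ' (fun m : ℕ => b (m : ZMod (2 * r))) (2 * r)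
    rw [h1, hb, ZMod.natCast_self] at h2
    simp only [Nat.cast_add, Nat.cast_one, Nat.cast_zero, ← hS] at h2
    linear_combination -h2
  have hdv : ∀ k, t ∣ S (2 * k) := by
    intro k
    induction k with
    | zero => simp [hS0]
    | succ k ih =>
      have h := hdvd (((2 * k + 1 : ℕ)) : ZMod (2 * r)) (by
        rw [ZMod.val_natCast, Nat.odd_iff, Nat.mod_mul_right_mod]; omega)
      have e : S (2 * (k + 1)) = S (2 * k) + (b (((2 * k + 1 : ℕ)) : ZMod (2 * r))
          + b ((((2 * k + 1 : ℕ)) : ZMod (2 * r)) + 1)) := by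
        rw [show 2 * (k + 1) = (2 * k + 1) + 1 by ring, hSs, hSs]
        push_cast
        ring
      rw [e]
      exact dvd_add ih h
  have hA : ∀ n, ∃ a : R, (Odd n → a = S n) ∧ (Even n → t * a = S n) := by
    intro n
    rcases Nat.even_or_odd n with h | h
    · obtain ⟨k, hk⟩ := h
      obtain ⟨c, hc⟩ := hdv k
      refine ⟨c, fun h' => ?_, fun _ => ?_⟩
      · rw [Nat.odd_iff] at h'; omega
      · rw [← hc, hk, two_mul]
    · exact ⟨S n, fun _ => rfl, fun h' => absurd h (Nat.not_odd_iff_even.mpr h')⟩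
  choose A hAo hAe using hA
  have hval : ∀ i : ZMod (2 * r), S (i + 1).val = S i.val + b (i + 1) ∧
      ((i + 1).val % 2 = (i.val + 1) % 2) := by
    intro i
    have h3 := hSs i.val
    rw [ZMod.natCast_zmod_val] at h3
    have hv : (i + 1).val = (i.val + 1) % (2 * r) := by
      rw [← ZMod.val_natCast]; simp
    refine ⟨?_, by rw [hv, Nat.mod_mul_right_mod]⟩
    rw [← h3, hv]
    rcases Nat.lt_or_ge (i.val + 1) (2 * r) with h | h
    · rw [Nat.mod_eq_of_lt h]
    · have : i.val + 1 = 2 * r := le_antisymm (ZMod.val_lt i) h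
      rw [this, Nat.mod_self, hS0, hSr]
  refine ⟨fun _ => ![1, 0], fun i => ![A i.val, 1], fun i => ?_, fun i => ?_⟩
  · simp [Matrix.det_fin_two]
  · obtain ⟨hs, hp⟩ := hval i
    refine ⟨fun h => ?_, fun h => ?_, fun h => ?_, fun h => ?_⟩
    · rw [hxeven _ h]; ext1 j; fin_cases j <;> simp [Matrix.mulVec, dotProduct]
    · rw [hxodd _ h]; ext1 j; fin_cases j <;> simp [Matrix.mulVec, dotProduct]
    · have h' : Even i.val := by rw [Nat.odd_iff] at h; rw [Nat.even_iff]; omega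
      have e : t * A i.val + b (i + 1) = A (i + 1).val := by
        rw [hAe _ h', hAo _ h, hs]
      rw [hxodd _ h]; ext1 j; fin_cases j <;> simp [Matrix.mulVec, dotProduct, e]
    · have h' : Odd i.val := by rw [Nat.even_iff] at h; rw [Nat.odd_iff]; omega
      have e : A i.val + b (i + 1) = t * A (i + 1).val := by
        rw [hAo _ h', hAe _ h, hs]
      rw [hxeven _ h]; ext1 j; fin_cases j <;> simp [Matrix.mulVec, dotProduct, e]

end
end
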